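/- Let Ω be a finite probability space, and let X : Ω → 𝒳, Y : Ω → 𝒴, Z : Ω → 𝒵 be random variables with 𝒳, 𝒴, 𝒵 finite and nonempty. Then the weak chain rule holds: H̃∞(X | (Y, Z)) ≥ H̃∞(X | Y) − log₂|𝒵|. -/

import Mathlib

open Finset Real

/-- Probability of an event `E` under the weight function `p` on a finite sample space. -/
noncomputable def pr {Ω : Type*} [Fintype Ω] (p : Ω → ℝ) (E : Set Ω) : ℝ :=
  ∑ ω, E.indicator p ω

/-- `P[X = x]`. -/
noncomputable def prEq {Ω 𝒳 : Type*} [Fintype Ω] (p : Ω → ℝ) (X : Ω → 𝒳) (x : 𝒳) : ℝ :=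
  pr p {ω | X ω = x}

/-- `P[X = x | Y = y]`, taken to be `0` when `P[Y = y] = 0`. -/
noncomputable def condProb {Ω 𝒳 𝒴 : Type*} [Fintype Ω]
    (p : Ω → ℝ) (X : Ω → 𝒳) (x : 𝒳) (Y : Ω → 𝒴) (y : 𝒴) : ℝ :=
  if prEq p Y y = 0 then 0 else pr p {ω | X ω = x ∧ Y ω = y} / prEq p Y y

/-- Average min-entropy `H̃∞(X | Y)`. -/
noncomputable def avgMinEntropy {Ω 𝒳 𝒴 : Type*} [Fintype Ω]
    [Fintype 𝒳] [Nonempty 𝒳] [Fintype 𝒴]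
    (p : Ω → ℝ) (X : Ω → 𝒳) (Y : Ω → 𝒴) : ℝ :=
  - Real.logb 2 (∑ y : 𝒴, prEq p Y y *
      (Finset.univ.sup' Finset.univ_nonempty fun x : 𝒳 => condProb p X x Y y))

/-- Min-entropy `H∞(X)`. -/
noncomputable def minEntropy {Ω 𝒳 : Type*} [Fintype Ω] [Fintype 𝒳] [Nonempty 𝒳]
    (p : Ω → ℝ) (X : Ω → 𝒳) : ℝ :=
  - Real.logb 2 (Finset.univ.sup' Finset.univ_nonempty fun x : 𝒳 => prEq p X x)

/-!
`2 ^ (-H̃∞(X | Y)) = ∑ y, max x, P[X = x, Y = y]` is the probability of guessing `X` correctly from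
`Y` with an optimal strategy. For each `y` and `z`, the event `X = x, Y = y, Z = z` is contained in
`X = x, Y = y`, so observing `Z` as well multiplies this probability by at most `|𝒵|`; the chain
rule is the logarithm of this inequality.
-/

section

variable {Ω 𝒳 𝒴 𝒵 : Type*} [Fintype Ω] {p : Ω → ℝ}

lemma pr_mono (hp : ∀ ω, 0 ≤ p ω) {E F : Set Ω} (h : E ⊆ F) : pr p E ≤ pr p F :=
  sum_le_sum fun ω _ => Set.indicator_le_indicator_of_subset h hp ω

lemma pr_nonneg (hp : ∀ ω, 0 ≤ p ω) (E : Set Ω) : 0 ≤ pr p E :=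
  sum_nonneg fun _ _ => Set.indicator_nonneg (fun ω _ => hp ω) _

lemma le_pr_of_mem (hp : ∀ ω, 0 ≤ p ω) {E : Set Ω} {ω : Ω} (hω : ω ∈ E) : p ω ≤ pr p E := by
  rw [← Set.indicator_of_mem hω p]
  exact single_le_sum (f := E.indicator p)
    (fun _ _ => Set.indicator_nonneg (fun ω _ => hp ω) _) (mem_univ ω)

lemma prEq_mul_condProb (hp : ∀ ω, 0 ≤ p ω) (X : Ω → 𝒳) (x : 𝒳) (Y : Ω → 𝒴) (y : 𝒴) :
    prEq p Y y * condProb p X x Y y = pr p {ω | X ω = x ∧ Y ω = y} := by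
  by_cases hy : prEq p Y y = 0
  · have joint_le : pr p {ω | X ω = x ∧ Y ω = y} ≤ prEq p Y y := pr_mono hp fun _ hω => hω.2
    rw [hy, zero_mul]
    exact (pr_nonneg hp _).antisymm (joint_le.trans_eq hy)
  · rw [condProb, if_neg hy, mul_div_cancel₀ _ hy]

variable [Fintype 𝒳] [Nonempty 𝒳]

/-- The guessing probability of `X` given `Y`: the probability of naming the value of `X`
correctly after observing `Y`, using the best strategy. It is written with joint rather than
conditional probabilities, so that null events `Y = y` need no convention. -/
noncomputable def guessProb [Fintype 𝒴] (p : Ω → ℝ) (X : Ω → 𝒳) (Y : Ω → 𝒴) : ℝ :=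
  ∑ y, univ.sup' univ_nonempty fun x => pr p {ω | X ω = x ∧ Y ω = y}

lemma avgMinEntropy_eq_neg_logb_guessProb [Fintype 𝒴] (hp : ∀ ω, 0 ≤ p ω)
    (X : Ω → 𝒳) (Y : Ω → 𝒴) : avgMinEntropy p X Y = -logb 2 (guessProb p X Y) := by
  have prEq_nonneg (y : 𝒴) : 0 ≤ prEq p Y y := pr_nonneg hp _
  simp only [avgMinEntropy, guessProb, mul₀_sup' (prEq_nonneg _), prEq_mul_condProb hp]

lemma le_guessProb [Fintype 𝒴] (hp : ∀ ω, 0 ≤ p ω) (X : Ω → 𝒳) (Y : Ω → 𝒴) (ω : Ω) :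
    p ω ≤ guessProb p X Y := by
  have joint_le_sup (x : 𝒳) (y : 𝒴) : pr p {ω | X ω = x ∧ Y ω = y} ≤
      univ.sup' univ_nonempty fun x => pr p {ω | X ω = x ∧ Y ω = y} :=
    le_sup' (fun x => pr p {ω | X ω = x ∧ Y ω = y}) (mem_univ x)
  calc
    p ω ≤ pr p {ω' | X ω' = X ω ∧ Y ω' = Y ω} := le_pr_of_mem hp ⟨rfl, rfl⟩
    _ ≤ univ.sup' univ_nonempty fun x => pr p {ω' | X ω' = x ∧ Y ω' = Y ω} := joint_le_sup _ _
    _ ≤ guessProb p X Y :=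
      single_le_sum (f := fun y => univ.sup' univ_nonempty fun x => pr p {ω | X ω = x ∧ Y ω = y})
        (fun y _ => (pr_nonneg hp _).trans (joint_le_sup (X ω) y)) (mem_univ (Y ω))

lemma guessProb_pos [Fintype 𝒴] (hp : ∀ ω, 0 ≤ p ω) (hsum : 0 < ∑ ω, p ω)
    (X : Ω → 𝒳) (Y : Ω → 𝒴) : 0 < guessProb p X Y := by
  obtain ⟨ω, -, hω⟩ := (sum_pos_iff_of_nonneg fun ω _ => hp ω).mp hsum
  exact hω.trans_le (le_guessProb hp X Y ω)

lemma guessProb_prodMk_le [Fintype 𝒴] [Fintype 𝒵] (hp : ∀ ω, 0 ≤ p ω)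
    (X : Ω → 𝒳) (Y : Ω → 𝒴) (Z : Ω → 𝒵) :
    guessProb p X (fun ω => (Y ω, Z ω)) ≤ Fintype.card 𝒵 * guessProb p X Y := by
  have forget_snd (x : 𝒳) (y : 𝒴) (z : 𝒵) :
      pr p {ω | X ω = x ∧ (Y ω, Z ω) = (y, z)} ≤ pr p {ω | X ω = x ∧ Y ω = y} :=
    pr_mono hp fun _ hω => ⟨hω.1, congrArg Prod.fst hω.2⟩
  calc
    guessProb p X (fun ω => (Y ω, Z ω))
      = ∑ y, ∑ z, univ.sup' univ_nonempty fun x => pr p {ω | X ω = x ∧ (Y ω, Z ω) = (y, z)} :=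
        Fintype.sum_prod_type _
    _ ≤ ∑ y, ∑ _z : 𝒵, univ.sup' univ_nonempty fun x => pr p {ω | X ω = x ∧ Y ω = y} :=
        sum_le_sum fun y _ => sum_le_sum fun z _ => sup'_mono_fun fun x _ => forget_snd x y z
    _ = Fintype.card 𝒵 * guessProb p X Y := by
        simp only [guessProb, sum_const, card_univ, nsmul_eq_mul, mul_sum]

end

theorem stmt_4 {Ω 𝒳 𝒴 𝒵 : Type*} [Fintype Ω]
    [Fintype 𝒳] [Nonempty 𝒳] [Fintype 𝒴] [Nonempty 𝒴] [Fintype 𝒵] [Nonempty 𝒵]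
    (p : Ω → ℝ) (hp : ∀ ω, 0 ≤ p ω) (hsum : ∑ ω, p ω = 1)
    (X : Ω → 𝒳) (Y : Ω → 𝒴) (Z : Ω → 𝒵) :
    avgMinEntropy p X (fun ω => (Y ω, Z ω)) ≥
      avgMinEntropy p X Y - Real.logb 2 (Fintype.card 𝒵) := by
  have hpos : 0 < ∑ ω, p ω := hsum ▸ one_pos
  have hcard : (Fintype.card 𝒵 : ℝ) ≠ 0 := Nat.cast_ne_zero.mpr Fintype.card_ne_zero
  have hlog : logb 2 (guessProb p X fun ω => (Y ω, Z ω)) ≤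
      logb 2 (Fintype.card 𝒵) + logb 2 (guessProb p X Y) := by
    rw [← logb_mul hcard (guessProb_pos hp hpos X Y).ne']
    exact logb_le_logb_of_le one_lt_two (guessProb_pos hp hpos X _) (guessProb_prodMk_le hp X Y Z)
  rw [avgMinEntropy_eq_neg_logb_guessProb hp, avgMinEntropy_eq_neg_logb_guessProb hp]
  linarith
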